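/- arXiv:2605.22746 — 2 statements merged into one kernel-verified Lean document; each statement's English description precedes it below -/
import Mathlib

section
/- Let α ∈ ℝ_{>0}^K, let π be a Dirichlet(α)-distributed random vector, and set p = α/α₀. Then 𝔼[‖π − p‖₂³] ≤ 2(1 − ‖p‖₂²) / (α₀ + 1). -/
open MeasureTheory ProbabilityTheory

/-!
Multiplying a gamma density by `x ^ s * exp (-t * x)` gives a multiple of another gamma density.
Hence, for independent `Gᵢ` of law `Gamma(αᵢ)` with sum `S`, exponents `sᵢ` with sum `σ`, and `T` of
law `Gamma(α₀)`, the ratio of `𝔼[∏ Gᵢ ^ sᵢ * exp (-t * S)]` to `𝔼[T ^ σ * exp (-t * T)]` is a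
constant `c` independent of `t`. Integrating against `t ^ (σ - 1) dt` replaces `exp (-t * S)` by
`Γ(σ) * S ^ (-σ)` and likewise for `T`, so that `𝔼[∏ (Gᵢ / S) ^ sᵢ] = c * 𝔼[T ^ σ * T ^ (-σ)] = c`:
this gives the mixed moments of the Dirichlet distribution without any change of variables on the
simplex. The moments of order one and two yield `𝔼[‖π - p‖²] = (1 - ‖p‖²) / (α₀ + 1)`, and higher
powers of the distance cost only a power of the diameter `√2` of the simplex.
-/

section Gamma

open scoped ENNReal

lemma measurable_gammaPDF (a r : ℝ) : Measurable (gammaPDF a r) :=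
  (measurable_gammaPDFReal a r).ennreal_ofReal

lemma ae_pos_gammaMeasure (a r : ℝ) : ∀ᵐ x ∂gammaMeasure a r, 0 < x := by
  rw [gammaMeasure, ae_withDensity_iff (measurable_gammaPDF a r)]
  filter_upwards [volume.ae_ne (0 : ℝ)] with x hx hpdf
  by_contra! hle
  exact hpdf (gammaPDF_of_neg (hle.lt_of_ne hx))

lemma rpow_mul_exp_mul_gammaPDFReal {a r s t x : ℝ} (has : 0 < a + s) (hrt : 0 < r + t)
    (hx : 0 < x) :
    x ^ s * Real.exp (-(x * t)) * gammaPDFReal a r x =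
      Real.Gamma (a + s) / Real.Gamma a * r ^ a * (r + t) ^ (-(a + s)) *
        gammaPDFReal (a + s) (r + t) x := by
  have hexp : Real.exp (-((r + t) * x)) = Real.exp (-(r * x)) * Real.exp (-(x * t)) := by
    rw [← Real.exp_add]
    ring_nf
  have hpow : x ^ (a + s - 1) = x ^ (a - 1) * x ^ s := by
    rw [← Real.rpow_add hx]
    ring_nf
  have hΓ := (Real.Gamma_pos_of_pos has).ne'
  have hrate := (Real.rpow_pos_of_pos hrt (a + s)).ne'
  rw [gammaPDFReal, gammaPDFReal, if_pos hx.le, if_pos hx.le, hexp, hpow, Real.rpow_neg hrt.le]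
  field_simp

lemma lintegral_rpow_mul_exp_gammaMeasure {a r s t : ℝ} (ha : 0 < a) (hr : 0 < r)
    (has : 0 < a + s) (hrt : 0 < r + t) :
    ∫⁻ x, ENNReal.ofReal (x ^ s * Real.exp (-(x * t))) ∂gammaMeasure a r =
      ENNReal.ofReal (Real.Gamma (a + s) / Real.Gamma a * r ^ a * (r + t) ^ (-(a + s))) := by
  set c := Real.Gamma (a + s) / Real.Gamma a * r ^ a * (r + t) ^ (-(a + s))
  have hc_nonneg : 0 ≤ c := by positivity
  calc ∫⁻ x, ENNReal.ofReal (x ^ s * Real.exp (-(x * t))) ∂gammaMeasure a r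
      = ∫⁻ x, gammaPDF a r x * ENNReal.ofReal (x ^ s * Real.exp (-(x * t))) := by
        rw [gammaMeasure,
          lintegral_withDensity_eq_lintegral_mul _ (measurable_gammaPDF a r) (by fun_prop)]
        rfl
    _ = ∫⁻ x, ENNReal.ofReal c * gammaPDF (a + s) (r + t) x := by
        refine lintegral_congr_ae ?_
        filter_upwards [volume.ae_ne (0 : ℝ)] with x hx
        rcases hx.lt_or_gt with hneg | hpos
        · simp [gammaPDF_of_neg hneg]
        · rw [gammaPDF, gammaPDF, ← ENNReal.ofReal_mul (gammaPDFReal_nonneg ha hr x),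
            ← ENNReal.ofReal_mul hc_nonneg, mul_comm,
            rpow_mul_exp_mul_gammaPDFReal has hrt hpos]
    _ = ENNReal.ofReal c := by
        rw [lintegral_const_mul _ (measurable_gammaPDF _ _), lintegral_gammaPDF_eq_one has hrt,
          mul_one]

lemma lintegral_Ioi_rpow_mul_exp_neg_mul {m s : ℝ} (hm : 0 < m) (hs : 0 < s) :
    ∫⁻ t in Set.Ioi 0, ENNReal.ofReal (t ^ (m - 1) * Real.exp (-(s * t))) =
      ENNReal.ofReal (Real.Gamma m * s ^ (-m)) := by
  have hval := Real.integral_rpow_mul_exp_neg_mul_Ioi hm hs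
  have hval_pos : 0 < (1 / s) ^ m * Real.Gamma m := by
    have := Real.Gamma_pos_of_pos hm
    positivity
  rw [← ofReal_integral_eq_lintegral_ofReal (.of_integral_ne_zero (hval ▸ hval_pos.ne')), hval,
    one_div, Real.inv_rpow hs.le, Real.rpow_neg hs.le, mul_comm]
  filter_upwards [ae_restrict_mem measurableSet_Ioi] with t (ht : 0 < t)
  positivity

section Laplace

variable {Ω Ω' : Type*} [MeasurableSpace Ω] [MeasurableSpace Ω'] {μ : Measure Ω}
  {ν : Measure Ω'} [SFinite μ] [SFinite ν] {X : Ω → ℝ≥0∞} {S : Ω → ℝ} {Y : Ω' → ℝ≥0∞}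
  {T : Ω' → ℝ} {m : ℝ}

lemma lintegral_Ioi_rpow_mul_laplace (hX : Measurable X) (hS : Measurable S)
    (hS_pos : ∀ᵐ ω ∂μ, 0 < S ω) (hm : 0 < m) :
    ∫⁻ t in Set.Ioi 0, ENNReal.ofReal (t ^ (m - 1)) *
        ∫⁻ ω, X ω * ENNReal.ofReal (Real.exp (-(S ω * t))) ∂μ =
      ENNReal.ofReal (Real.Gamma m) * ∫⁻ ω, X ω * ENNReal.ofReal (S ω ^ (-m)) ∂μ := by
  have hΓ : 0 ≤ Real.Gamma m := (Real.Gamma_pos_of_pos hm).le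
  calc ∫⁻ t in Set.Ioi 0, ENNReal.ofReal (t ^ (m - 1)) *
        ∫⁻ ω, X ω * ENNReal.ofReal (Real.exp (-(S ω * t))) ∂μ
      = ∫⁻ t in Set.Ioi 0, ∫⁻ ω,
          X ω * ENNReal.ofReal (t ^ (m - 1) * Real.exp (-(S ω * t))) ∂μ := by
        refine lintegral_congr fun t ↦ ?_
        rw [← lintegral_const_mul _ (by fun_prop)]
        refine lintegral_congr fun ω ↦ ?_
        rw [ENNReal.ofReal_mul' (Real.exp_nonneg _), mul_left_comm]
    _ = ∫⁻ ω, X ω * (∫⁻ t in Set.Ioi 0,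
          ENNReal.ofReal (t ^ (m - 1) * Real.exp (-(S ω * t)))) ∂μ := by
        rw [lintegral_lintegral_swap (by fun_prop)]
        exact lintegral_congr fun ω ↦ lintegral_const_mul _ (by fun_prop)
    _ = ∫⁻ ω, ENNReal.ofReal (Real.Gamma m) * (X ω * ENNReal.ofReal (S ω ^ (-m))) ∂μ := by
        refine lintegral_congr_ae ?_
        filter_upwards [hS_pos] with ω hω
        rw [lintegral_Ioi_rpow_mul_exp_neg_mul hm hω, ENNReal.ofReal_mul hΓ, mul_left_comm]
    _ = ENNReal.ofReal (Real.Gamma m) * ∫⁻ ω, X ω * ENNReal.ofReal (S ω ^ (-m)) ∂μ :=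
        lintegral_const_mul _ (by fun_prop)

lemma lintegral_mul_rpow_neg_eq_of_laplace_eq (hX : Measurable X) (hS : Measurable S)
    (hS_pos : ∀ᵐ ω ∂μ, 0 < S ω) (hY : Measurable Y) (hT : Measurable T)
    (hT_pos : ∀ᵐ ω ∂ν, 0 < T ω) (hm : 0 < m) (c : ℝ≥0∞)
    (hlaplace : ∀ t > 0, ∫⁻ ω, X ω * ENNReal.ofReal (Real.exp (-(S ω * t))) ∂μ =
      c * ∫⁻ ω, Y ω * ENNReal.ofReal (Real.exp (-(T ω * t))) ∂ν) :
    ∫⁻ ω, X ω * ENNReal.ofReal (S ω ^ (-m)) ∂μ =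
      c * ∫⁻ ω, Y ω * ENNReal.ofReal (T ω ^ (-m)) ∂ν := by
  have hΓ : ENNReal.ofReal (Real.Gamma m) ≠ 0 := by simpa using Real.Gamma_pos_of_pos hm
  refine (ENNReal.mul_right_inj hΓ ENNReal.ofReal_ne_top).1 ?_
  rw [← lintegral_Ioi_rpow_mul_laplace hX hS hS_pos hm, mul_left_comm,
    ← lintegral_Ioi_rpow_mul_laplace hY hT hT_pos hm, ← lintegral_const_mul _ (by fun_prop)]
  refine setLIntegral_congr_fun measurableSet_Ioi fun t ht ↦ ?_
  simp only [hlaplace t ht, mul_left_comm]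

end Laplace

lemma lintegral_pi_prod_eq_prod_lintegral {ι : Type*} [Fintype ι] {E : ι → Type*}
    [∀ i, MeasurableSpace (E i)] (μ : ∀ i, Measure (E i)) [∀ i, IsProbabilityMeasure (μ i)]
    {f : ∀ i, E i → ℝ≥0∞} (hf : ∀ i, Measurable (f i)) :
    ∫⁻ x, ∏ i, f i (x i) ∂Measure.pi μ = ∏ i, ∫⁻ y, f i y ∂μ i := by
  rw [lintegral_prod_eq_prod_lintegral_of_indepFun _ _
    (iIndepFun_pi fun i ↦ (hf i).aemeasurable) (by fun_prop)]
  exact Finset.prod_congr rfl fun i _ ↦ (measurePreserving_eval μ i).lintegral_comp (hf i)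

variable {ι : Type*} [Fintype ι] {α s : ι → ℝ} {r : ℝ}

lemma ae_pos_pi_gammaMeasure (hα : ∀ i, 0 < α i) (hr : 0 < r) :
    ∀ᵐ x ∂(Measure.pi fun i ↦ gammaMeasure (α i) r), ∀ i, 0 < x i := by
  have (i : ι) : IsProbabilityMeasure (gammaMeasure (α i) r) :=
    isProbabilityMeasure_gammaMeasure (hα i) hr
  exact ae_all_iff.2 fun i ↦
    (Measure.quasiMeasurePreserving_eval _ i).ae (ae_pos_gammaMeasure (α i) r)

lemma lintegral_prod_rpow_mul_exp_pi_gammaMeasure {t : ℝ} (hα : ∀ i, 0 < α i) (hr : 0 < r)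
    (hαs : ∀ i, 0 < α i + s i) (hrt : 0 < r + t) :
    ∫⁻ x, (∏ i, ENNReal.ofReal (x i ^ s i)) * ENNReal.ofReal (Real.exp (-((∑ i, x i) * t)))
        ∂(Measure.pi fun i ↦ gammaMeasure (α i) r) =
      ENNReal.ofReal ((∏ i, Real.Gamma (α i + s i) / Real.Gamma (α i)) * r ^ (∑ i, α i) *
        (r + t) ^ (-(∑ i, α i + ∑ i, s i))) := by
  have (i : ι) : IsProbabilityMeasure (gammaMeasure (α i) r) :=
    isProbabilityMeasure_gammaMeasure (hα i) hr
  have hfactor (x : ι → ℝ) :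
      (∏ i, ENNReal.ofReal (x i ^ s i)) * ENNReal.ofReal (Real.exp (-((∑ i, x i) * t))) =
        ∏ i, ENNReal.ofReal (x i ^ s i * Real.exp (-(x i * t))) := by
    simp_rw [ENNReal.ofReal_mul' (Real.exp_nonneg _), Finset.prod_mul_distrib, Finset.sum_mul,
      ← Finset.sum_neg_distrib, Real.exp_sum,
      ENNReal.ofReal_prod_of_nonneg fun _ _ ↦ Real.exp_nonneg _]
  have hΓ (i : ι) : 0 < Real.Gamma (α i) := Real.Gamma_pos_of_pos (hα i)
  have hΓs (i : ι) : 0 < Real.Gamma (α i + s i) := Real.Gamma_pos_of_pos (hαs i)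
  simp_rw [hfactor]
  rw [lintegral_pi_prod_eq_prod_lintegral (f := fun i y ↦
    ENNReal.ofReal (y ^ s i * Real.exp (-(y * t)))) _ (by fun_prop)]
  simp_rw [lintegral_rpow_mul_exp_gammaMeasure (hα _) hr (hαs _) hrt]
  rw [← ENNReal.ofReal_prod_of_nonneg fun i _ ↦ by have := hΓ i; have := hΓs i; positivity,
    Finset.prod_mul_distrib, Finset.prod_mul_distrib, ← Real.rpow_sum_of_pos hr,
    ← Real.rpow_sum_of_pos hrt, Finset.sum_neg_distrib, Finset.sum_add_distrib]

lemma lintegral_prod_rpow_mul_exp_pi_gammaMeasure_eq_mul [Nonempty ι] {t : ℝ}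
    (hα : ∀ i, 0 < α i) (hr : 0 < r) (hαs : ∀ i, 0 < α i + s i) (hrt : 0 < r + t) :
    ∫⁻ x, (∏ i, ENNReal.ofReal (x i ^ s i)) * ENNReal.ofReal (Real.exp (-((∑ i, x i) * t)))
        ∂(Measure.pi fun i ↦ gammaMeasure (α i) r) =
      ENNReal.ofReal ((∏ i, Real.Gamma (α i + s i) / Real.Gamma (α i)) *
          (Real.Gamma (∑ i, α i) / Real.Gamma (∑ i, α i + ∑ i, s i))) *
        ∫⁻ y, ENNReal.ofReal (y ^ ∑ i, s i) * ENNReal.ofReal (Real.exp (-(y * t)))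
          ∂gammaMeasure (∑ i, α i) r := by
  have hα_sum : 0 < ∑ i, α i := Finset.sum_pos (fun i _ ↦ hα i) Finset.univ_nonempty
  have hαs_sum : 0 < ∑ i, α i + ∑ i, s i := by
    rw [← Finset.sum_add_distrib]
    exact Finset.sum_pos (fun i _ ↦ hαs i) Finset.univ_nonempty
  have := Real.Gamma_pos_of_pos hα_sum
  have := Real.Gamma_pos_of_pos hαs_sum
  simp_rw [← ENNReal.ofReal_mul' (Real.exp_nonneg _)]
  rw [lintegral_prod_rpow_mul_exp_pi_gammaMeasure hα hr hαs hrt,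
    lintegral_rpow_mul_exp_gammaMeasure hα_sum hr hαs_sum hrt,
    ← ENNReal.ofReal_mul' (by positivity)]
  congr 1
  field_simp

lemma lintegral_prod_rpow_mul_sum_rpow_neg_pi_gammaMeasure (hα : ∀ i, 0 < α i) (hr : 0 < r)
    (hαs : ∀ i, 0 < α i + s i) (hs : 0 < ∑ i, s i) :
    ∫⁻ x, (∏ i, ENNReal.ofReal (x i ^ s i)) * ENNReal.ofReal ((∑ i, x i) ^ (-∑ i, s i))
        ∂(Measure.pi fun i ↦ gammaMeasure (α i) r) =
      ENNReal.ofReal ((∏ i, Real.Gamma (α i + s i) / Real.Gamma (α i)) *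
        (Real.Gamma (∑ i, α i) / Real.Gamma (∑ i, α i + ∑ i, s i))) := by
  have : Nonempty ι := not_isEmpty_iff.1 fun _ ↦ by simp at hs
  have (i : ι) : IsProbabilityMeasure (gammaMeasure (α i) r) :=
    isProbabilityMeasure_gammaMeasure (hα i) hr
  have : IsProbabilityMeasure (gammaMeasure (∑ i, α i) r) :=
    isProbabilityMeasure_gammaMeasure
      (Finset.sum_pos (fun i _ ↦ hα i) Finset.univ_nonempty) hr
  have hsum_pos : ∀ᵐ x ∂(Measure.pi fun i ↦ gammaMeasure (α i) r), 0 < ∑ i, x i := by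
    filter_upwards [ae_pos_pi_gammaMeasure hα hr] with x hx
    exact Finset.sum_pos (fun i _ ↦ hx i) Finset.univ_nonempty
  have hone : ∀ᵐ y ∂gammaMeasure (∑ i, α i) r,
      ENNReal.ofReal (y ^ ∑ i, s i) * ENNReal.ofReal (y ^ (-∑ i, s i)) = 1 := by
    filter_upwards [ae_pos_gammaMeasure _ r] with y hy
    rw [← ENNReal.ofReal_mul (by positivity), ← Real.rpow_add hy, add_neg_cancel,
      Real.rpow_zero, ENNReal.ofReal_one]
  rw [lintegral_mul_rpow_neg_eq_of_laplace_eq (by fun_prop) (by fun_prop) hsum_pos (by fun_prop)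
    measurable_id (ae_pos_gammaMeasure _ r) hs _ fun t ht ↦
      lintegral_prod_rpow_mul_exp_pi_gammaMeasure_eq_mul hα hr hαs (add_pos hr ht)]
  simp only [id, lintegral_congr_ae hone, lintegral_one, measure_univ, mul_one]

end Gamma

section Simplex

variable {ι : Type*} [Fintype ι]

/-- The projection `x ↦ x / ∑ j, x j` of the positive orthant onto the standard simplex, valued in
Euclidean space. It sends a gamma vector to a Dirichlet vector and the parameter `α` to the mean
`α / α₀`. If the coordinates sum to zero, the value is `0`. -/
noncomputable def sumNormalize (x : ι → ℝ) : EuclideanSpace ℝ ι :=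
  WithLp.toLp 2 fun i ↦ x i / ∑ j, x j

@[simp]
lemma sumNormalize_apply (x : ι → ℝ) (i : ι) : sumNormalize x i = x i / ∑ j, x j := rfl

@[fun_prop]
lemma measurable_sumNormalize : Measurable (sumNormalize : (ι → ℝ) → EuclideanSpace ℝ ι) := by
  unfold sumNormalize
  fun_prop

lemma sumNormalize_mem_stdSimplex [Nonempty ι] {x : ι → ℝ} (hx : ∀ i, 0 < x i) :
    (sumNormalize x).ofLp ∈ stdSimplex ℝ ι := by
  have hsum : 0 < ∑ i, x i := Finset.sum_pos (fun i _ ↦ hx i) Finset.univ_nonempty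
  refine ⟨fun i ↦ (div_pos (hx i) hsum).le, ?_⟩
  simp only [sumNormalize_apply, ← Finset.sum_div, div_self hsum.ne']

variable {x y : EuclideanSpace ℝ ι}

lemma norm_sq_le_one_of_mem_stdSimplex (hx : x.ofLp ∈ stdSimplex ℝ ι) : ‖x‖ ^ 2 ≤ 1 := by
  rw [EuclideanSpace.real_norm_sq_eq, ← hx.2]
  refine Finset.sum_le_sum fun i _ ↦ ?_
  have := mem_Icc_of_mem_stdSimplex hx i
  exact pow_le_of_le_one this.1 this.2 two_ne_zero

lemma norm_sub_le_sqrt_two_of_mem_stdSimplex (hx : x.ofLp ∈ stdSimplex ℝ ι)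
    (hy : y.ofLp ∈ stdSimplex ℝ ι) : ‖x - y‖ ≤ √2 := by
  have hinner : 0 ≤ inner ℝ x y := by
    rw [PiLp.inner_apply]
    exact Finset.sum_nonneg fun i _ ↦ mul_nonneg (hy.1 i) (hx.1 i)
  refine Real.le_sqrt_of_sq_le ?_
  rw [norm_sub_sq_real]
  linarith [norm_sq_le_one_of_mem_stdSimplex hx, norm_sq_le_one_of_mem_stdSimplex hy]

end Simplex

section Dirichlet

variable {ι : Type*} [Fintype ι] {α : ι → ℝ}

/-- The Dirichlet distribution with parameter `α`, as the law of the normalization of a vector of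
independent `Gamma(αᵢ, 1)` variables rather than through a density, since the simplex is Lebesgue
null. -/
noncomputable def dirichletMeasure (α : ι → ℝ) : Measure (EuclideanSpace ℝ ι) :=
  (Measure.pi fun i ↦ gammaMeasure (α i) 1).map sumNormalize

lemma isProbabilityMeasure_dirichletMeasure (hα : ∀ i, 0 < α i) :
    IsProbabilityMeasure (dirichletMeasure α) := by
  have (i : ι) : IsProbabilityMeasure (gammaMeasure (α i) 1) :=
    isProbabilityMeasure_gammaMeasure (hα i) one_pos
  exact Measure.isProbabilityMeasure_map measurable_sumNormalize.aemeasurable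

lemma hasLaw_dirichletMeasure_of_iIndepFun {Ω : Type*} [MeasurableSpace Ω] {μ : Measure Ω}
    {G : ι → Ω → ℝ} (hlaw : ∀ i, HasLaw (G i) (gammaMeasure (α i) 1) μ) (hindep : iIndepFun G μ) :
    HasLaw (fun ω ↦ sumNormalize fun i ↦ G i ω) (dirichletMeasure α) μ :=
  have hnormalize : HasLaw sumNormalize (dirichletMeasure α)
      (Measure.pi fun i ↦ gammaMeasure (α i) 1) := ⟨measurable_sumNormalize.aemeasurable, rfl⟩
  hnormalize.fun_comp (hindep.hasLaw_pi hlaw)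

lemma ae_mem_stdSimplex_dirichletMeasure [Nonempty ι] (hα : ∀ i, 0 < α i) :
    ∀ᵐ x ∂dirichletMeasure α, x.ofLp ∈ stdSimplex ℝ ι := by
  refine (ae_map_iff measurable_sumNormalize.aemeasurable ?_).2 ?_
  · exact (isClosed_stdSimplex ℝ ι).measurableSet.preimage (by fun_prop)
  · filter_upwards [ae_pos_pi_gammaMeasure hα one_pos] with x hx
    exact sumNormalize_mem_stdSimplex hx

lemma memLp_apply_dirichletMeasure (hα : ∀ i, 0 < α i) (i : ι) (q : ENNReal) :
    MemLp (fun x : EuclideanSpace ℝ ι ↦ x i) q (dirichletMeasure α) := by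
  have : Nonempty ι := ⟨i⟩
  have := isProbabilityMeasure_dirichletMeasure hα
  refine MemLp.of_bound (by fun_prop) 1 ?_
  filter_upwards [ae_mem_stdSimplex_dirichletMeasure hα] with x hx
  have := mem_Icc_of_mem_stdSimplex hx i
  rw [Real.norm_of_nonneg this.1]
  exact this.2

lemma integral_prod_rpow_dirichletMeasure {s : ι → ℝ} (hα : ∀ i, 0 < α i)
    (hαs : ∀ i, 0 < α i + s i) (hs : 0 < ∑ i, s i) :
    ∫ x, ∏ i, x i ^ s i ∂dirichletMeasure α =
      (∏ i, Real.Gamma (α i + s i) / Real.Gamma (α i)) *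
        (Real.Gamma (∑ i, α i) / Real.Gamma (∑ i, α i + ∑ i, s i)) := by
  have : Nonempty ι := not_isEmpty_iff.1 fun _ ↦ by simp at hs
  have hsum_pos {x : ι → ℝ} (hx : ∀ i, 0 < x i) : 0 < ∑ i, x i :=
    Finset.sum_pos (fun i _ ↦ hx i) Finset.univ_nonempty
  have hΓ {x : ι → ℝ} (hx : ∀ i, 0 < x i) (i : ι) : 0 < Real.Gamma (x i) :=
    Real.Gamma_pos_of_pos (hx i)
  have hnonneg : ∀ᵐ x ∂dirichletMeasure α, 0 ≤ ∏ i, x i ^ s i := by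
    filter_upwards [ae_mem_stdSimplex_dirichletMeasure hα] with x hx
    exact Finset.prod_nonneg fun i _ ↦ Real.rpow_nonneg (hx.1 i) _
  have hnormalize : ∀ᵐ x ∂(Measure.pi fun i ↦ gammaMeasure (α i) 1),
      ENNReal.ofReal (∏ i, sumNormalize x i ^ s i) =
        (∏ i, ENNReal.ofReal (x i ^ s i)) * ENNReal.ofReal ((∑ i, x i) ^ (-∑ i, s i)) := by
    filter_upwards [ae_pos_pi_gammaMeasure hα one_pos] with x hx
    have hS := hsum_pos hx
    rw [← ENNReal.ofReal_prod_of_nonneg fun i _ ↦ Real.rpow_nonneg (hx i).le _,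
      ← ENNReal.ofReal_mul' (by positivity), Real.rpow_neg hS.le, Real.rpow_sum_of_pos hS,
      ← div_eq_mul_inv, ← Finset.prod_div_distrib]
    simp only [sumNormalize_apply, Real.div_rpow (hx _).le hS.le]
  rw [integral_eq_lintegral_of_nonneg_ae hnonneg (Measurable.aestronglyMeasurable (by fun_prop)),
    dirichletMeasure, lintegral_map (by fun_prop) measurable_sumNormalize,
    lintegral_congr_ae hnormalize,
    lintegral_prod_rpow_mul_sum_rpow_neg_pi_gammaMeasure hα one_pos hαs hs, ENNReal.toReal_ofReal]
  have := Real.Gamma_pos_of_pos (hsum_pos hα)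
  have := Real.Gamma_pos_of_pos (add_pos (hsum_pos hα) hs)
  exact mul_nonneg (Finset.prod_nonneg fun i _ ↦ (div_pos (hΓ hαs i) (hΓ hα i)).le) (by positivity)

lemma integral_apply_rpow_dirichletMeasure (hα : ∀ i, 0 < α i) (i : ι) {k : ℝ} (hk : 0 < k) :
    ∫ x, x i ^ k ∂dirichletMeasure α =
      Real.Gamma (α i + k) / Real.Gamma (α i) *
        (Real.Gamma (∑ j, α j) / Real.Gamma (∑ j, α j + k)) := by
  classical
  have hpow (x : EuclideanSpace ℝ ι) : ∏ j, x j ^ (Pi.single i k : ι → ℝ) j = x i ^ k := by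
    rw [Finset.prod_eq_single i] <;> simp +contextual
  have hΓ : ∏ j, Real.Gamma (α j + (Pi.single i k : ι → ℝ) j) / Real.Gamma (α j) =
      Real.Gamma (α i + k) / Real.Gamma (α i) := by
    rw [Finset.prod_eq_single i] <;>
      simp +contextual [(Real.Gamma_pos_of_pos (hα _)).ne']
  have hαk (j : ι) : 0 < α j + (Pi.single i k : ι → ℝ) j :=
    add_pos_of_pos_of_nonneg (hα j) ((Pi.single_nonneg (α := fun _ ↦ ℝ) (i := i)).2 hk.le j)
  simpa [hpow, hΓ] using integral_prod_rpow_dirichletMeasure hα hαk (by simpa)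

lemma integral_apply_dirichletMeasure (hα : ∀ i, 0 < α i) (i : ι) :
    ∫ x, x i ∂dirichletMeasure α = α i / ∑ j, α j := by
  have hα_sum : 0 < ∑ j, α j := Finset.sum_pos (fun j _ ↦ hα j) ⟨i, Finset.mem_univ i⟩
  have hΓ := (Real.Gamma_pos_of_pos (hα i)).ne'
  have hΓ_sum := (Real.Gamma_pos_of_pos hα_sum).ne'
  have hmoment := integral_apply_rpow_dirichletMeasure hα i one_pos
  simp only [Real.rpow_one, Real.Gamma_add_one (hα i).ne', Real.Gamma_add_one hα_sum.ne'] at hmoment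
  rw [hmoment]
  field_simp

lemma integral_apply_sq_dirichletMeasure (hα : ∀ i, 0 < α i) (i : ι) :
    ∫ x, x i ^ 2 ∂dirichletMeasure α =
      α i * (α i + 1) / ((∑ j, α j) * (∑ j, α j + 1)) := by
  have hα_sum : 0 < ∑ j, α j := Finset.sum_pos (fun j _ ↦ hα j) ⟨i, Finset.mem_univ i⟩
  have hΓ_add_two {a : ℝ} (ha : 0 < a) : Real.Gamma (a + 2) = (a + 1) * (a * Real.Gamma a) := by
    rw [← one_add_one_eq_two, ← add_assoc, Real.Gamma_add_one (by positivity),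
      Real.Gamma_add_one ha.ne']
  have hΓ := (Real.Gamma_pos_of_pos (hα i)).ne'
  have hΓ_sum := (Real.Gamma_pos_of_pos hα_sum).ne'
  have hmoment := integral_apply_rpow_dirichletMeasure hα i two_pos
  simp only [Real.rpow_two, hΓ_add_two (hα i), hΓ_add_two hα_sum] at hmoment
  rw [hmoment]
  field_simp

lemma variance_apply_dirichletMeasure (hα : ∀ i, 0 < α i) (i : ι) :
    Var[fun x ↦ x i; dirichletMeasure α] =
      sumNormalize α i * (1 - sumNormalize α i) / (∑ j, α j + 1) := by
  have := isProbabilityMeasure_dirichletMeasure hα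
  have hα_sum : 0 < ∑ j, α j := Finset.sum_pos (fun j _ ↦ hα j) ⟨i, Finset.mem_univ i⟩
  rw [variance_eq_sub (memLp_apply_dirichletMeasure hα i 2)]
  simp only [Pi.pow_apply, integral_apply_dirichletMeasure hα,
    integral_apply_sq_dirichletMeasure hα, sumNormalize_apply]
  field_simp
  ring

lemma integral_norm_sub_sq_dirichletMeasure [Nonempty ι] (hα : ∀ i, 0 < α i) :
    ∫ x, ‖x - sumNormalize α‖ ^ 2 ∂dirichletMeasure α =
      (1 - ‖sumNormalize α‖ ^ 2) / (∑ i, α i + 1) := by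
  have := isProbabilityMeasure_dirichletMeasure hα
  have hLp (i : ι) := memLp_apply_dirichletMeasure hα i 2
  calc ∫ x, ‖x - sumNormalize α‖ ^ 2 ∂dirichletMeasure α
      = ∑ i, ∫ x, (x i - sumNormalize α i) ^ 2 ∂dirichletMeasure α := by
        simp only [EuclideanSpace.real_norm_sq_eq, PiLp.sub_apply]
        exact integral_finsetSum _ fun i _ ↦ ((hLp i).sub (memLp_const _)).integrable_sq
    _ = ∑ i, Var[fun x ↦ x i; dirichletMeasure α] := by
        refine Finset.sum_congr rfl fun i _ ↦ ?_
        rw [variance_eq_integral (hLp i).aemeasurable, integral_apply_dirichletMeasure hα,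
          sumNormalize_apply]
    _ = (∑ i, sumNormalize α i - ∑ i, sumNormalize α i ^ 2) / (∑ i, α i + 1) := by
        simp only [variance_apply_dirichletMeasure hα, ← Finset.sum_div, mul_one_sub, ← sq,
          Finset.sum_sub_distrib]
    _ = (1 - ‖sumNormalize α‖ ^ 2) / (∑ i, α i + 1) := by
        rw [(sumNormalize_mem_stdSimplex hα).2, EuclideanSpace.real_norm_sq_eq]

theorem integral_norm_sub_pow_dirichletMeasure_le [Nonempty ι] (hα : ∀ i, 0 < α i) (n : ℕ) :
    ∫ x, ‖x - sumNormalize α‖ ^ (n + 2) ∂dirichletMeasure α ≤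
      √2 ^ n * ((1 - ‖sumNormalize α‖ ^ 2) / (∑ i, α i + 1)) := by
  rw [← integral_norm_sub_sq_dirichletMeasure hα, ← integral_const_mul]
  have := isProbabilityMeasure_dirichletMeasure hα
  have hdist : ∀ᵐ x ∂dirichletMeasure α, ‖x - sumNormalize α‖ ≤ √2 := by
    filter_upwards [ae_mem_stdSimplex_dirichletMeasure hα] with x hx
    exact norm_sub_le_sqrt_two_of_mem_stdSimplex hx (sumNormalize_mem_stdSimplex hα)
  have hLp : MemLp (fun x ↦ x - sumNormalize α) 2 (dirichletMeasure α) :=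
    MemLp.of_bound (by fun_prop) _ hdist
  refine integral_mono_of_nonneg (.of_forall fun x ↦ by positivity)
    (hLp.integrable_norm_pow two_ne_zero |>.const_mul _) ?_
  filter_upwards [hdist] with x hx
  rw [pow_add]
  gcongr

end Dirichlet

theorem dirichlet_expected_cubed_dist_le_general {ι : Type*} [Fintype ι] [Nonempty ι]
    {Ω : Type*} [MeasurableSpace Ω] {μ : Measure Ω} {α : ι → ℝ} (hα : ∀ i, 0 < α i)
    {π : Ω → EuclideanSpace ℝ ι} (hπ : HasLaw π (dirichletMeasure α) μ) (n : ℕ) :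
    ∫ ω, ‖π ω - sumNormalize α‖ ^ (n + 2) ∂μ ≤
      √2 ^ n * ((1 - ‖sumNormalize α‖ ^ 2) / (∑ i, α i + 1)) :=
  (hπ.integral_comp (f := fun x ↦ ‖x - sumNormalize α‖ ^ (n + 2)) (by fun_prop)).trans_le
    (integral_norm_sub_pow_dirichletMeasure_le hα n)

/-- **Dirichlet third-moment bound.**
Let `π` be a Dirichlet(α)-distributed random vector, realized as
`π_i = G_i / (G_1 + ⋯ + G_K)` where the `G_i` are independent Gamma(α_i, 1)
random variables, and let `p = α/α₀`.  Then
`𝔼[‖π − p‖₂³] ≤ 2(1 − ‖p‖₂²)/(α₀ + 1)`. -/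
theorem dirichlet_expected_cubed_dist_le {K : ℕ} (hK : 0 < K)
    {Ω : Type*} [MeasurableSpace Ω] (μ : Measure Ω) [IsProbabilityMeasure μ]
    (α : Fin K → ℝ) (hα : ∀ i, 0 < α i)
    (G : Fin K → Ω → ℝ) (hGmeas : ∀ i, Measurable (G i))
    (hGindep : iIndepFun G μ)
    (hGlaw : ∀ i, μ.map (G i) = gammaMeasure (α i) 1)
    (π : Ω → EuclideanSpace ℝ (Fin K))
    (hπ : ∀ ω i, π ω i = G i ω / ∑ j, G j ω)
    (α₀ : ℝ) (hα₀ : α₀ = ∑ j, α j)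
    (p : EuclideanSpace ℝ (Fin K)) (hp : ∀ i, p i = α i / α₀) :
    ∫ ω, ‖π ω - p‖ ^ 3 ∂μ ≤ 2 * (1 - ‖p‖ ^ 2) / (α₀ + 1) := by
  have : Nonempty (Fin K) := Fin.pos_iff_nonempty.1 hK
  obtain rfl := hα₀
  obtain rfl : p = sumNormalize α := PiLp.ext hp
  obtain rfl : π = fun ω ↦ sumNormalize fun i ↦ G i ω := funext fun ω ↦ PiLp.ext (hπ ω)
  have hlaw := hasLaw_dirichletMeasure_of_iIndepFun
    (fun i ↦ ⟨(hGmeas i).aemeasurable, hGlaw i⟩) hGindep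
  have htotal : 0 ≤ (1 - ‖sumNormalize α‖ ^ 2) / (∑ i, α i + 1) :=
    integral_norm_sub_sq_dirichletMeasure hα ▸ integral_nonneg fun _ ↦ sq_nonneg _
  calc ∫ ω, ‖sumNormalize (fun i ↦ G i ω) - sumNormalize α‖ ^ 3 ∂μ
      ≤ √2 ^ 1 * ((1 - ‖sumNormalize α‖ ^ 2) / (∑ i, α i + 1)) :=
        dirichlet_expected_cubed_dist_le_general hα hlaw 1
    _ ≤ 2 * ((1 - ‖sumNormalize α‖ ^ 2) / (∑ i, α i + 1)) := by
        gcongr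
        rw [pow_one, Real.sqrt_le_left two_pos.le]
        norm_num
    _ = 2 * (1 - ‖sumNormalize α‖ ^ 2) / (∑ i, α i + 1) := (mul_div_assoc ..).symm
end

section
/- Let α ∈ ℝ_{>0}^K, α₀ = Σ_{j=1}^K α_j, and fix y ∈ {1,…,K} with p_y = α_y/α₀. Define Δ_CE(α, y) = (ψ(α₀) − log α₀) − (ψ(α_y) − log α_y), where ψ is the digamma function. If p_y ≥ δ for some δ > 0, then |Δ_CE(α, y)| ≤ (1 + δ⁻¹)/α₀. -/
/-- The digamma function `ψ(t) = Γ'(t)/Γ(t)`, the logarithmic derivative of the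
real Gamma function. -/
noncomputable def digamma (t : ℝ) : ℝ := deriv Real.Gamma t / Real.Gamma t

/-!
Since `log Γ` is convex and rises by `log x` over `[x, x + 1]`, its slopes at the endpoints satisfy
`ψ(x) ≤ log x ≤ ψ(x + 1) = ψ(x) + 1/x`. Hence `log x - ψ(x)` lies in `[0, 1/x]`, and its values at
`s` and `x` differ by at most `max (1/s) (1/x)`, where `1/x ≤ δ⁻¹/s` as soon as `δ ≤ x/s`.
-/

theorem deriv_Gamma_add_one {x : ℝ} (hx : ∀ m : ℕ, x ≠ -m) :
    deriv Real.Gamma (x + 1) = Real.Gamma x + x * deriv Real.Gamma x := by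
  have hx₀ : x ≠ 0 := by simpa using hx 0
  have h_eq : (fun t => Real.Gamma (t + 1)) =ᶠ[nhds x] fun t => t * Real.Gamma t := by
    filter_upwards [eventually_ne_nhds hx₀] with t ht using Real.Gamma_add_one ht
  rw [← deriv_comp_add_const, h_eq.deriv_eq,
    deriv_fun_mul differentiableAt_fun_id (Real.differentiableAt_Gamma hx), deriv_id'', one_mul]

theorem digamma_add_one {x : ℝ} (hx : ∀ m : ℕ, x ≠ -m) :
    digamma (x + 1) = digamma x + x⁻¹ := by
  have hx₀ : x ≠ 0 := by simpa using hx 0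
  have hΓ : Real.Gamma x ≠ 0 := Real.Gamma_ne_zero hx
  rw [digamma, digamma, deriv_Gamma_add_one hx, Real.Gamma_add_one hx₀]
  field_simp
  ring

theorem hasDerivAt_log_Gamma {x : ℝ} (hx : ∀ m : ℕ, x ≠ -m) :
    HasDerivAt (Real.log ∘ Real.Gamma) (digamma x) x :=
  (Real.differentiableAt_Gamma hx).hasDerivAt.log (Real.Gamma_ne_zero hx)

theorem slope_log_Gamma_add_one {x : ℝ} (hx : ∀ m : ℕ, x ≠ -m) :
    slope (Real.log ∘ Real.Gamma) x (x + 1) = Real.log x := by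
  have hx₀ : x ≠ 0 := by simpa using hx 0
  simp only [slope_def_field, Function.comp_apply, Real.Gamma_add_one hx₀,
    Real.log_mul hx₀ (Real.Gamma_ne_zero hx), add_sub_cancel_left, add_sub_cancel_right, div_one]

theorem ne_neg_natCast_of_pos {R : Type*} [Ring R] [PartialOrder R] [IsOrderedRing R] {x : R}
    (hx : 0 < x) (m : ℕ) : x ≠ -m :=
  ((neg_nonpos.2 m.cast_nonneg).trans_lt hx).ne'

theorem digamma_le_log {x : ℝ} (hx : 0 < x) : digamma x ≤ Real.log x := by
  have hx' := ne_neg_natCast_of_pos hx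
  rw [← slope_log_Gamma_add_one hx']
  exact Real.convexOn_log_Gamma.le_slope_of_hasDerivAt hx (add_pos hx one_pos) (lt_add_one x)
    (hasDerivAt_log_Gamma hx')

theorem log_le_digamma_add_one {x : ℝ} (hx : 0 < x) : Real.log x ≤ digamma (x + 1) := by
  have hx₁ : 0 < x + 1 := add_pos hx one_pos
  rw [← slope_log_Gamma_add_one (ne_neg_natCast_of_pos hx)]
  exact Real.convexOn_log_Gamma.slope_le_of_hasDerivAt hx hx₁ (lt_add_one x)
    (hasDerivAt_log_Gamma (ne_neg_natCast_of_pos hx₁))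

theorem log_sub_digamma_mem_Icc {x : ℝ} (hx : 0 < x) :
    Real.log x - digamma x ∈ Set.Icc 0 x⁻¹ := by
  have h_upper : Real.log x ≤ digamma x + x⁻¹ :=
    digamma_add_one (ne_neg_natCast_of_pos hx) ▸ log_le_digamma_add_one hx
  exact ⟨sub_nonneg.2 (digamma_le_log hx), sub_le_iff_le_add'.2 h_upper⟩

theorem abs_digamma_sub_log_sub_le_max_inv {s x : ℝ} (hs : 0 < s) (hx : 0 < x) :
    |(digamma s - Real.log s) - (digamma x - Real.log x)| ≤ max s⁻¹ x⁻¹ := by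
  obtain ⟨hs_nonneg, hs_le⟩ := log_sub_digamma_mem_Icc hs
  obtain ⟨hx_nonneg, hx_le⟩ := log_sub_digamma_mem_Icc hx
  rw [← neg_sub (Real.log s), ← neg_sub (Real.log x), neg_sub_neg]
  exact abs_sub_le_of_nonneg_of_le hx_nonneg (hx_le.trans (le_max_right _ _))
    hs_nonneg (hs_le.trans (le_max_left _ _))

theorem abs_ce_plugin_correction_le_general {s x δ : ℝ} (hx : 0 < x) (hδ : 0 < δ)
    (hxs : δ ≤ x / s) :
    |(digamma s - Real.log s) - (digamma x - Real.log x)| ≤ (1 + δ⁻¹) / s := by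
  have hs : 0 < s := (div_pos_iff_of_pos_left hx).1 (hδ.trans_le hxs)
  have hx_inv : x⁻¹ ≤ δ⁻¹ / s := by
    rw [div_eq_mul_inv, ← mul_inv]
    exact inv_anti₀ (mul_pos hδ hs) ((le_div_iff₀ hs).1 hxs)
  calc |(digamma s - Real.log s) - (digamma x - Real.log x)|
      ≤ max s⁻¹ x⁻¹ := abs_digamma_sub_log_sub_le_max_inv hs hx
    _ ≤ s⁻¹ + x⁻¹ := max_le_add_of_nonneg (inv_nonneg.2 hs.le) (inv_nonneg.2 hx.le)
    _ ≤ 1 / s + δ⁻¹ / s := add_le_add (one_div s).ge hx_inv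
    _ = (1 + δ⁻¹) / s := (add_div 1 δ⁻¹ s).symm

/-- **Bound on the cross-entropy plug-in correction.**
With `α₀ = Σ_j α_j`, `p_y = α_y/α₀` and
`Δ_CE(α, y) = (ψ(α₀) − log α₀) − (ψ(α_y) − log α_y)`, if `p_y ≥ δ > 0` then
`|Δ_CE(α, y)| ≤ (1 + δ⁻¹)/α₀`. -/
theorem abs_ce_plugin_correction_le {K : ℕ}
    (α : Fin K → ℝ) (hα : ∀ i, 0 < α i)
    (α₀ : ℝ) (hα₀ : α₀ = ∑ j, α j)
    (y : Fin K)
    (pY : ℝ) (hpY : pY = α y / α₀)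
    (δ : ℝ) (hδ : 0 < δ) (hpYδ : δ ≤ pY) :
    |(digamma α₀ - Real.log α₀) - (digamma (α y) - Real.log (α y))| ≤
      (1 + δ⁻¹) / α₀ :=
  abs_ce_plugin_correction_le_general (hα y) hδ (hpY ▸ hpYδ)
end
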